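/- Let R be a simple finitely generated unital associative F-algebra with an involution * and an idempotent e such that ee* = e*e = 0 and e + e* = 1, and suppose R is not finite-dimensional as a module over its center Z. Let K₋₂ = K ∩ eRe* and K₂ = K ∩ e*Re. Then the Jordan pair (K₋₂, K₂) with triple products {a,b,c} = abc + cba is finitely generated: there exist finite subsets S ⊆ K₋₂ and T ⊆ K₂ such that for every pair of F-subspaces V ⊆ K₋₂ and W ⊆ K₂ with S ⊆ V, T ⊆ W, a b c + c b a ∈ V for all a,c ∈ V, b ∈ W, and b a b′ + b′ a b ∈ W for all b,b′ ∈ W, a ∈ V, one has V = K₋₂ and W = K₂. -/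

import Mathlib

/-!
Write `A = e R e`, `M = K ∩ e R e*` and `N = K ∩ e* R e`. For `k ∈ M` and `l ∈ N` the product `k l`
lies in `A`, and `v ↦ {k, l, v}` is the action on `M` of `a ⊗ 1 + 1 ⊗ a` for `a = k l`, where
`p ⊗ q` in `A ⊗ A` acts by `v ↦ p v q*`. A subspace of `M` stable under `a ⊗ 1 + 1 ⊗ a` for all
`a ∈ A` is `0` or `M`, since `R` is simple. So it is enough to find finitely many products `k l`
whose doubles `a ⊗ 1 + 1 ⊗ a` generate a subalgebra containing all doubles.

* All products together suffice. Their span is a Lie ideal of `A`, and they do not all commute,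
  since otherwise `A` would be finite over its center. The `a ∈ A` whose double lies in the
  generated subalgebra therefore form an additive subgroup `S` that contains every commutator; it
  also contains `(a c + c a) b` as soon as it contains `a`, `b`, `c`, `a c`, `a b` and `c b`. If
  `S ≠ A`, density in the simple module `A` over `A ⊗ Aᵒᵖ` forces `a c + c a` into the span of
  `1, a, c` whenever `a, c, a c ∈ S`, so the elements of `S` are quadratic over the center and `A`
  is finite over it.
* Finitely many suffice. The doubles generate the algebra of traces `t + σ t`, with `σ` the flip of
  `A ⊗ A`. Galois coordinates `∑ X i * Y i = 1`, `∑ X i * σ (Y i) = 0` give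
  `tr (t u) = ∑ tr (t * X i) * tr (Y i * u)`, which makes this algebra finitely generated along with
  `A ⊗ A`. The same mechanism shows that the corner `A` is finitely generated.

If `R` is finite over its center, the Artin-Tate lemma and Zariski's lemma make it finite over `F`.
-/

section SimpleRing

section MultiplicationModule

open scoped TensorProduct

variable {k A : Type*} [CommRing k] [Ring A] [Algebra k A]

attribute [local instance] TensorProduct.Algebra.module

theorem isSimpleModule_tensorProduct_mulOpposite [IsSimpleRing A] :
    IsSimpleModule (A ⊗[k] Aᵐᵒᵖ) A := by
  rw [isSimpleModule_iff]
  refine { exists_pair_ne := ⟨⊥, ⊤, bot_ne_top⟩, eq_bot_or_eq_top := fun N => ?_ }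
  have hleft (x : A) {y : A} (hy : y ∈ N) : x * y ∈ N := by
    simpa [TensorProduct.Algebra.smul_def] using N.smul_mem (x ⊗ₜ[k] 1) hy
  have hright (x : A) {y : A} (hy : y ∈ N) : y * x ∈ N := by
    simpa [TensorProduct.Algebra.smul_def] using N.smul_mem (1 ⊗ₜ[k] MulOpposite.op x) hy
  let I : TwoSidedIdeal A :=
    .mk' N N.zero_mem N.add_mem N.neg_mem (hleft _) (hright _)
  have hI {x : A} : x ∈ I ↔ x ∈ N := TwoSidedIdeal.mem_mk' ..
  rcases eq_bot_or_eq_top I with h | h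
  · refine .inl ((Submodule.eq_bot_iff N).2 fun x hx => ?_)
    simpa [h] using hI.2 hx
  · refine .inr (eq_top_iff.2 fun x _ => hI.1 ?_)
    simp [h]

theorem exists_forall_smul_eq_sum_mul_mul (r : A ⊗[k] Aᵐᵒᵖ) :
    ∃ (n : ℕ) (p q : Fin n → A), ∀ x : A, r • x = ∑ i, p i * x * q i := by
  obtain ⟨s, rfl⟩ := TensorProduct.exists_finset r
  refine ⟨s.card, fun i => (s.equivFin.symm i).1.1, fun i => (s.equivFin.symm i).1.2.unop,
    fun x => ?_⟩
  rw [s.equivFin.symm.sum_comp (fun j : s => j.1.1 * x * j.1.2.unop),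
    s.sum_coe_sort (fun j => j.1 * x * j.2.unop), Finset.sum_smul]
  simp [TensorProduct.Algebra.smul_def, mul_assoc]

end MultiplicationModule

variable {A : Type*} [Ring A] [IsSimpleRing A]

attribute [local instance] TensorProduct.Algebra.module in
theorem exists_sum_mul_mul_eq_one {a : A} (ha : a ≠ 0) :
    ∃ (n : ℕ) (x y : Fin n → A), ∑ i, x i * a * y i = 1 := by
  have := isSimpleModule_tensorProduct_mulOpposite (k := ℤ) (A := A)
  obtain ⟨r, hr⟩ := IsSimpleModule.toSpanSingleton_surjective (TensorProduct ℤ A Aᵐᵒᵖ) ha 1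
  obtain ⟨n, x, y, h⟩ := exists_forall_smul_eq_sum_mul_mul r
  exact ⟨n, x, y, (h a).symm.trans hr⟩

theorem eq_zero_of_forall_mul_mul_eq_zero {p q : A} (hp : p ≠ 0) (h : ∀ x, p * x * q = 0) :
    q = 0 := by
  obtain ⟨n, x, y, hxy⟩ := exists_sum_mul_mul_eq_one hp
  rw [← one_mul q, ← hxy, Finset.sum_mul]
  exact Finset.sum_eq_zero fun i _ => by
    rw [mul_assoc (x i), mul_assoc, h, mul_zero]

theorem exists_eq_mul_of_forall_mul_mul_comm {a b : A} (ha : a ≠ 0)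
    (h : ∀ x, a * x * b = b * x * a) : ∃ w : A, (∀ x : A, ⁅w, x⁆ = 0) ∧ b = w * a := by
  obtain ⟨n, x, y, hxy⟩ := exists_sum_mul_mul_eq_one ha
  let w := ∑ i, x i * b * y i
  refine ⟨w, fun r => sub_eq_zero.2 ?_, ?_⟩
  · calc w * r = w * r * ∑ i, x i * a * y i := by rw [hxy, mul_one]
      _ = ∑ i, ∑ j, x j * (b * (y j * r * x i) * a) * y i := by
        simp only [w, Finset.mul_sum, Finset.sum_mul, mul_assoc]
      _ = ∑ i, ∑ j, x j * (a * (y j * r * x i) * b) * y i := by simp only [h]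
      _ = (∑ j, x j * a * y j) * (r * w) := by
        simp only [w, Finset.mul_sum, Finset.sum_mul, mul_assoc]
      _ = r * w := by rw [hxy, one_mul]
  · calc b = (∑ i, x i * a * y i) * b := by rw [hxy, one_mul]
      _ = ∑ i, x i * (a * y i * b) := by simp only [Finset.sum_mul, mul_assoc]
      _ = w * a := by simp only [h, w, Finset.sum_mul, mul_assoc]

theorem isUnit_of_forall_commute {z : A} (hz : z ≠ 0) (hcomm : ∀ x, Commute z x) : IsUnit z := by
  obtain ⟨n, x, y, hxy⟩ := exists_sum_mul_mul_eq_one hz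
  have hmul : (∑ i, x i * y i) * z = 1 := by
    simpa only [Finset.sum_mul, mul_assoc, (hcomm _).eq] using hxy
  exact ⟨⟨z, _, (hcomm _).eq.trans hmul, hmul⟩, rfl⟩

theorem lie_mem_of_lie_stable (S : AddSubgroup A) (hS : ∀ s ∈ S, ∀ a : A, ⁅s, a⁆ ∈ S) {p q : A}
    (hp : p ∈ S) (hq : q ∈ S) (hpq : ⁅p, q⁆ ≠ 0) (x y : A) : ⁅x, y⁆ ∈ S := by
  let T : NonUnitalSubring A :=
    { carrier := {t | ∀ z : A, ⁅t, z⁆ ∈ S}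
      zero_mem' := fun z => by simp [Ring.lie_def]
      add_mem' := fun hs ht z => by
        convert add_mem (hs z) (ht z) using 1
        simp only [Ring.lie_def]
        noncomm_ring
      neg_mem' := fun ht z => by
        convert neg_mem (ht z) using 1
        simp only [Ring.lie_def]
        noncomm_ring
      mul_mem' := fun {s t} hs ht z => by
        convert add_mem (hs (t * z)) (ht (z * s)) using 1
        simp only [Ring.lie_def]
        noncomm_ring }
  have hST {s : A} (hs : s ∈ S) : s ∈ T := hS s hs
  have hright (z : A) : ⁅p, q⁆ * z ∈ T := by
    convert sub_mem (hST (hST hp (q * z))) (mul_mem (hST hq) (hST (hST hp z))) using 1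
    simp only [Ring.lie_def]
    noncomm_ring
  have hideal (u v : A) : u * ⁅p, q⁆ * v ∈ T := by
    convert sub_mem (hright (v * u)) (hST (hright v u)) using 1
    simp only [Ring.lie_def]
    noncomm_ring
  obtain ⟨n, u, v, huv⟩ := exists_sum_mul_mul_eq_one hpq
  have hx : x ∈ T := by
    rw [← mul_one x, ← huv, Finset.mul_sum]
    exact sum_mem fun i _ => by simpa only [mul_assoc] using hideal (x * u i) (v i)
  exact hx y

theorem lie_eq_zero_of_lie_lie_eq_zero (h2 : (2 : A) ≠ 0) {p : A}
    (h : ∀ x : A, ⁅p, ⁅p, x⁆⁆ = 0) (x : A) : ⁅p, x⁆ = 0 := by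
  have h2' : IsUnit (2 : A) := isUnit_of_forall_commute h2 fun x => .ofNat_left 2 x
  have hmul (x y : A) : ⁅p, x⁆ * ⁅p, y⁆ = 0 := by
    have leibniz : ⁅p, ⁅p, x * y⁆⁆ = ⁅p, ⁅p, x⁆⁆ * y + 2 * (⁅p, x⁆ * ⁅p, y⁆) + x * ⁅p, ⁅p, y⁆⁆ := by
      simp only [Ring.lie_def]
      noncomm_ring
    rw [h, h, h, zero_mul, mul_zero, zero_add, add_zero] at leibniz
    exact h2'.mul_right_eq_zero.1 leibniz.symm
  by_contra hx
  refine hx (eq_zero_of_forall_mul_mul_eq_zero hx fun y => ?_)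
  have : ⁅p, x⁆ * y * ⁅p, x⁆ = ⁅p, x⁆ * ⁅p, y * x⁆ - ⁅p, x⁆ * ⁅p, y⁆ * x := by
    simp only [Ring.lie_def]
    noncomm_ring
  rw [this, hmul, hmul, zero_mul, sub_zero]

theorem exists_lie_lie_ne_zero {x y : A} (hxy : ⁅x, y⁆ ≠ 0) : ∃ u v z : A, ⁅z, ⁅u, v⁆⁆ ≠ 0 := by
  by_contra! h
  have hunit : IsUnit ⁅x, y⁆ :=
    isUnit_of_forall_commute hxy fun z => .symm (sub_eq_zero.1 (h x y z))
  have hsq : ⁅x, y⁆ * ⁅x, y⁆ = x * ⁅y, ⁅x, y⁆⁆ - ⁅y, ⁅x, x * y⁆⁆ := by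
    simp only [Ring.lie_def]
    noncomm_ring
  rw [h, h, mul_zero, sub_zero, hunit.mul_right_eq_zero] at hsq
  exact hxy hsq

end SimpleRing

section FiniteDimensional

variable {Z A : Type*} [CommRing Z] [Ring A] [Algebra Z A] [IsSimpleRing A]

theorem finite_of_forall_mul_mul_mem {p q : A} (hp : p ≠ 0) (hq : q ≠ 0) {N : Submodule Z A}
    (hN : N.FG) (h : ∀ x, p * x * q ∈ N) : Module.Finite Z A := by
  obtain ⟨n, u, v, huv⟩ := exists_sum_mul_mul_eq_one hp
  obtain ⟨m, u', v', huv'⟩ := exists_sum_mul_mul_eq_one hq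
  let L (i : Fin n) (j : Fin m) : A →ₗ[Z] A :=
    LinearMap.mulLeft Z (u i) ∘ₗ LinearMap.mulRight Z (v' j)
  refine ⟨?_⟩
  have htop : (⊤ : Submodule Z A) = ⨆ i, ⨆ j, N.map (L i j) := by
    refine eq_comm.1 (eq_top_iff.2 fun x _ => ?_)
    have hx : x = ∑ i, ∑ j, L i j (p * (v i * x * u' j) * q) := by
      calc x = (∑ i, u i * p * v i) * x * ∑ j, u' j * q * v' j := by
            rw [huv, huv', one_mul, mul_one]
        _ = _ := by
          simp only [Finset.sum_mul, Finset.mul_sum, L, LinearMap.comp_apply,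
            LinearMap.mulLeft_apply, LinearMap.mulRight_apply, mul_assoc]
          exact Finset.sum_comm
    rw [hx]
    refine sum_mem fun i _ => sum_mem fun j _ => ?_
    exact Submodule.mem_iSup_of_mem i (Submodule.mem_iSup_of_mem j ⟨_, h _, rfl⟩)
  rw [htop]
  exact Submodule.fg_iSup _ fun i => Submodule.fg_iSup _ fun j => hN.map _

theorem lie_eq_zero_of_forall_lie_mem (hinf : ¬ Module.Finite Z A) {y : A} {N : Submodule Z A}
    (hN : N.FG) (h : ∀ x, ⁅y, x⁆ ∈ N) (z : A) : ⁅y, z⁆ = 0 := by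
  by_contra hz
  refine hinf (finite_of_forall_mul_mul_mem one_ne_zero hz
    (hN.sup (hN.map (LinearMap.mulRight Z z))) fun x => ?_)
  have : 1 * x * ⁅y, z⁆ = ⁅y, x * z⁆ - ⁅y, x⁆ * z := by
    simp only [Ring.lie_def]
    noncomm_ring
  rw [this, sub_eq_add_neg]
  exact Submodule.add_mem_sup (h _) (neg_mem ⟨_, h x, rfl⟩)

theorem finite_of_forall_mul_lie_add_lie_mul_mem {a y : A} (hya : ⁅y, a⁆ ≠ 0) {N : Submodule Z A}
    (hN : N.FG) {c : Z} (h : ∀ x, a * ⁅y, x⁆ + ⁅y, x⁆ * a - c • ⁅y, x⁆ ∈ N) :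
    Module.Finite Z A := by
  have hlie_mul (x : A) : ⁅y, x⁆ * ⁅y, a⁆ ∈ N ⊔ N.map (LinearMap.mulRight Z y) := by
    have : ⁅y, x⁆ * ⁅y, a⁆ = (a * ⁅y, x * y⁆ + ⁅y, x * y⁆ * a - c • ⁅y, x * y⁆) -
        (a * ⁅y, x⁆ + ⁅y, x⁆ * a - c • ⁅y, x⁆) * y := by
      simp only [Ring.lie_def, sub_mul, smul_sub, mul_sub, add_mul, smul_mul_assoc, mul_assoc]
      abel
    rw [this, sub_eq_add_neg]
    exact Submodule.add_mem_sup (h _) (neg_mem ⟨_, h x, rfl⟩)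
  have hN' := hN.sup (hN.map (LinearMap.mulRight Z y))
  refine finite_of_forall_mul_mul_mem hya hya (hN'.sup (hN'.map (LinearMap.mulLeft Z a)))
    fun x => ?_
  have : ⁅y, a⁆ * x * ⁅y, a⁆ = ⁅y, a * x⁆ * ⁅y, a⁆ - a * (⁅y, x⁆ * ⁅y, a⁆) := by
    simp only [Ring.lie_def]
    noncomm_ring
  rw [this, sub_eq_add_neg]
  exact Submodule.add_mem_sup (hlie_mul _) (neg_mem ⟨_, hlie_mul x, rfl⟩)

end FiniteDimensional

section Proportional

variable {Z X Y : Type*} [Field Z] [AddCommGroup X] [Module Z X] [AddCommGroup Y] [Module Z Y]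

theorem exists_eq_smul_of_forall_exists_eq_smul (f g : X →ₗ[Z] Y)
    (h : ∀ x, ∃ c : Z, f x = c • g x) : ∃ c : Z, f = c • g := by
  obtain ⟨r, hr⟩ := g.rangeRestrict.exists_rightInverse_of_surjective g.range_rangeRestrict
  have hgr (w : g.range) : g (r w) = w := congrArg Subtype.val (LinearMap.congr_fun hr w)
  have hfr (w : g.range) : ∃ c : Z, f (r w) = c • (w : Y) := hgr w ▸ h (r w)
  let φ : g.range →ₗ[Z] g.range := (f ∘ₗ r).codRestrict g.range fun w => by
    obtain ⟨c, hc⟩ := hfr w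
    exact hc ▸ g.range.smul_mem c w.2
  obtain ⟨c, hφ⟩ := LinearMap.exists_eq_smul_id_of_forall_notLinearIndependent (f := φ)
    fun w hw => by
      obtain ⟨c, hc⟩ := hfr w
      have hφw : c • w + (-1 : Z) • φ w = 0 := by
        rw [neg_one_smul, ← sub_eq_add_neg, sub_eq_zero]
        exact Subtype.ext hc.symm
      exact neg_ne_zero.2 one_ne_zero (LinearIndependent.pair_iff.1 hw c (-1) hφw).2
  have hker (x : X) (hx : g x = 0) : f x = 0 := by
    obtain ⟨c, hc⟩ := h x
    rw [hc, hx, smul_zero]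
  refine ⟨c, LinearMap.ext fun x => ?_⟩
  have hx := hker (x - r (g.rangeRestrict x)) (by simp [hgr])
  rw [map_sub, sub_eq_zero] at hx
  exact hx.trans (congrArg Subtype.val (LinearMap.congr_fun hφ (g.rangeRestrict x)))

theorem exists_forall_sub_smul_mem (f g : X →ₗ[Z] Y) (N : Submodule Z Y)
    (h : ∀ x, ∃ c : Z, f x - c • g x ∈ N) : ∃ c : Z, ∀ x, f x - c • g x ∈ N := by
  obtain ⟨c, hc⟩ := exists_eq_smul_of_forall_exists_eq_smul (N.mkQ ∘ₗ f) (N.mkQ ∘ₗ g) fun x =>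
    (h x).imp fun c hc => (Submodule.Quotient.eq N).2 hc
  exact ⟨c, fun x => (Submodule.Quotient.eq N).1 (LinearMap.congr_fun hc x)⟩

end Proportional

section CentralSimple

variable {Z A : Type*} [Field Z] [Ring A] [Algebra Z A]

theorem exists_forall_mul_lie_add_lie_mul_sub_smul_mem_span {S : AddSubgroup A}
    (hS : ∀ x y : A, ⁅x, y⁆ ∈ S) (h : ∀ a ∈ S, a * a ∈ Submodule.span Z {1, a}) {a : A}
    (ha : a ∈ S) (y : A) :
    ∃ c : Z, ∀ x, a * ⁅y, x⁆ + ⁅y, x⁆ * a - c • ⁅y, x⁆ ∈ Submodule.span Z {1, a} := by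
  refine exists_forall_sub_smul_mem
    ((LinearMap.mulLeft Z a + LinearMap.mulRight Z a) ∘ₗ
      (LinearMap.mulLeft Z y - LinearMap.mulRight Z y))
    (LinearMap.mulLeft Z y - LinearMap.mulRight Z y) _ fun x => ?_
  obtain ⟨c₁, d₁, h₁⟩ := Submodule.mem_span_pair.1 (h _ (add_mem ha (hS y x)))
  obtain ⟨c₂, d₂, h₂⟩ := Submodule.mem_span_pair.1 (h _ (hS y x))
  obtain ⟨c₃, d₃, h₃⟩ := Submodule.mem_span_pair.1 (h a ha)
  refine ⟨d₁ - d₂, Submodule.mem_span_pair.2 ⟨c₁ - c₂ - c₃, d₁ - d₃, ?_⟩⟩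
  have hpolar : a * ⁅y, x⁆ + ⁅y, x⁆ * a =
      (a + ⁅y, x⁆) * (a + ⁅y, x⁆) - a * a - ⁅y, x⁆ * ⁅y, x⁆ := by noncomm_ring
  change _ = a * ⁅y, x⁆ + ⁅y, x⁆ * a - (d₁ - d₂) • ⁅y, x⁆
  rw [hpolar, ← h₁, ← h₂, ← h₃]
  module

variable [Algebra.IsCentral Z A]

theorem mem_span_one_of_forall_lie_eq_zero {a : A} (h : ∀ x : A, ⁅a, x⁆ = 0) :
    a ∈ Submodule.span Z {1} := by
  have ha : a ∈ Subalgebra.center Z A := Subalgebra.mem_center_iff.2 fun x =>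
    (sub_eq_zero.1 (h x)).symm
  rwa [Algebra.IsCentral.center_eq_bot, ← Subalgebra.mem_toSubmodule, Algebra.toSubmodule_bot,
    Submodule.one_eq_span] at ha

theorem exists_lie_ne_zero_of_not_finite (hinf : ¬ Module.Finite Z A) :
    ∃ x y : A, ⁅x, y⁆ ≠ 0 := by
  by_contra! h
  exact hinf ⟨{1}, eq_top_iff.2 fun x _ => by
    simpa using mem_span_one_of_forall_lie_eq_zero (Z := Z) (h x)⟩

variable [IsSimpleRing A]

theorem finite_of_forall_mul_self_mem_span {S : AddSubgroup A} (hS : ∀ x y : A, ⁅x, y⁆ ∈ S)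
    (h : ∀ a ∈ S, a * a ∈ Submodule.span Z {1, a}) : Module.Finite Z A := by
  by_contra hinf
  obtain ⟨x, y, hxy⟩ := exists_lie_ne_zero_of_not_finite hinf
  obtain ⟨u, v, z, hz⟩ := exists_lie_lie_ne_zero hxy
  obtain ⟨c, hc⟩ := exists_forall_mul_lie_add_lie_mul_sub_smul_mem_span hS h (hS u v) z
  exact hinf (finite_of_forall_mul_lie_add_lie_mul_mem hz (Submodule.fg_span (Set.toFinite _)) hc)

theorem mul_self_mem_span_of_forall_lie (hinf : ¬ Module.Finite Z A) {a : A}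
    (h : ∀ x, a * ⁅a, x⁆ + ⁅a, x⁆ * a ∈ Submodule.span Z {1, a, ⁅a, x⁆}) :
    a * a ∈ Submodule.span Z {1, a} := by
  obtain ⟨c, hc⟩ := exists_forall_sub_smul_mem
    ((LinearMap.mulLeft Z a + LinearMap.mulRight Z a) ∘ₗ
      (LinearMap.mulLeft Z a - LinearMap.mulRight Z a))
    (LinearMap.mulLeft Z a - LinearMap.mulRight Z a) (Submodule.span Z {1, a}) fun x => by
      obtain ⟨c₁, c₂, c₃, hx⟩ := Submodule.mem_span_triple.1 (h x)
      refine ⟨c₃, Submodule.mem_span_pair.2 ⟨c₁, c₂, ?_⟩⟩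
      change _ = a * ⁅a, x⁆ + ⁅a, x⁆ * a - c₃ • ⁅a, x⁆
      rw [← hx, add_sub_cancel_right]
  have hcentral (z : A) : ⁅a * a - c • a, z⁆ = 0 :=
    lie_eq_zero_of_forall_lie_mem hinf (Submodule.fg_span (Set.toFinite {1, a})) (fun x => by
      convert hc x using 1
      change (a * a - c • a) * x - x * (a * a - c • a) =
        a * (a * x - x * a) + (a * x - x * a) * a - c • (a * x - x * a)
      simp only [sub_mul, mul_sub, smul_mul_assoc, mul_smul_comm, smul_sub, mul_assoc]
      abel) z
  obtain ⟨d, hd⟩ := Submodule.mem_span_singleton.1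
    (mem_span_one_of_forall_lie_eq_zero (Z := Z) hcentral)
  exact Submodule.mem_span_pair.2 ⟨d, c, by rw [hd, sub_add_cancel]⟩

end CentralSimple

section Density

open scoped TensorProduct

variable {Z A : Type*} [Field Z] [Ring A] [Algebra Z A] [Algebra.IsCentral Z A]

attribute [local instance] TensorProduct.Algebra.module in
theorem exists_eq_smul_of_end_tensorProduct_mulOpposite (f : Module.End (A ⊗[Z] Aᵐᵒᵖ) A) :
    ∃ c : Z, ∀ x, f x = c • x := by
  have hleft (x y : A) : f (x * y) = x * f y := by
    simpa [TensorProduct.Algebra.smul_def] using f.map_smul (x ⊗ₜ[Z] 1) y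
  have hright (x y : A) : f (y * x) = f y * x := by
    simpa [TensorProduct.Algebra.smul_def] using f.map_smul (1 ⊗ₜ[Z] MulOpposite.op x) y
  have hcomm (x : A) : ⁅f 1, x⁆ = 0 := by
    rw [Ring.lie_def, ← hleft, ← hright, one_mul, mul_one, sub_self]
  obtain ⟨c, hc⟩ := Submodule.mem_span_singleton.1
    (mem_span_one_of_forall_lie_eq_zero (Z := Z) hcomm)
  exact ⟨c, fun x => by rw [← mul_one x, hleft, ← hc, mul_smul_comm]⟩

attribute [local instance] TensorProduct.Algebra.module in
theorem exists_sum_mul_mul_eq_zero_and_eq_one [IsSimpleRing A] (s : Finset A) {y : A}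
    (hy : y ∉ Submodule.span Z (s : Set A)) :
    ∃ (n : ℕ) (p q : Fin n → A), (∀ x ∈ s, ∑ i, p i * x * q i = 0) ∧
      ∑ i, p i * y * q i = 1 := by
  classical
  have := isSimpleModule_tensorProduct_mulOpposite (k := Z) (A := A)
  obtain ⟨φ, hφy, hφs⟩ := Submodule.exists_le_ker_of_notMem hy
  let f : Module.End (Module.End (A ⊗[Z] Aᵐᵒᵖ) A) A :=
    { toFun := fun x => ((φ y)⁻¹ * φ x) • (1 : A)
      map_add' := fun x x' => by rw [map_add, mul_add, add_smul]
      map_smul' := fun g x => by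
        obtain ⟨c, hc⟩ := exists_eq_smul_of_end_tensorProduct_mulOpposite g
        simp only [Module.End.smul_def, hc, map_smul, smul_smul, smul_eq_mul, RingHom.id_apply,
          mul_left_comm c] }
  obtain ⟨r, hr⟩ := jacobson_density f (insert y s)
  obtain ⟨n, p, q, hpq⟩ := exists_forall_smul_eq_sum_mul_mul r
  refine ⟨n, p, q, fun x hx => ?_, ?_⟩
  · rw [← hpq, ← hr x (Finset.mem_insert_of_mem hx)]
    change ((φ y)⁻¹ * φ x) • (1 : A) = 0
    rw [LinearMap.mem_ker.1 (hφs (Submodule.subset_span hx)), mul_zero, zero_smul]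
  · rw [← hpq, ← hr y (Finset.mem_insert_self y s)]
    change ((φ y)⁻¹ * φ y) • (1 : A) = 1
    rw [inv_mul_cancel₀ hφy, one_smul]

end Density

section JordanClosed

variable {A : Type*} [Ring A]

theorem exists_forall_mul_sub_sum_mul_mul_mul_mem {S : AddSubgroup A}
    (hS : ∀ x y : A, ⁅x, y⁆ ∈ S) {n : ℕ} (p q : Fin n → A) (d : A) :
    ∃ b, ∀ z, z * b - (∑ i, p i * z * q i) * d ∈ S := by
  refine ⟨∑ i, q i * d * p i, fun z => ?_⟩
  have : z * ∑ i, q i * d * p i - (∑ i, p i * z * q i) * d = ∑ i, ⁅z * q i * d, p i⁆ := by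
    simp only [Finset.mul_sum, Finset.sum_mul, ← Finset.sum_sub_distrib, Ring.lie_def, mul_assoc]
  exact this ▸ sum_mem fun i _ => hS _ _

variable {Z : Type*} [Field Z] [Algebra Z A] [IsSimpleRing A] [Algebra.IsCentral Z A]
  {S : AddSubgroup A}

theorem mul_add_mul_mem_span_of_jordan_closed (hS : ∀ x y : A, ⁅x, y⁆ ∈ S) (hne : S ≠ ⊤)
    (hclosed : ∀ a ∈ S, ∀ c ∈ S, ∀ b ∈ S, a * c ∈ S → a * b ∈ S → c * b ∈ S →
      (a * c + c * a) * b ∈ S)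
    {a c : A} (ha : a ∈ S) (hc : c ∈ S) (hac : a * c ∈ S) :
    a * c + c * a ∈ Submodule.span Z {1, a, c} := by
  classical
  by_contra hmem
  refine hne (eq_top_iff.2 fun d _ => ?_)
  obtain ⟨n, p, q, hzero, hone⟩ := exists_sum_mul_mul_eq_zero_and_eq_one (Z := Z) {1, a, c}
    (y := a * c + c * a) (by simpa using hmem)
  obtain ⟨b, hb⟩ := exists_forall_mul_sub_sum_mul_mul_mul_mem hS p q d
  have hmul_mem {z : A} (hz : z ∈ ({1, a, c} : Finset A)) : z * b ∈ S := by
    simpa [hzero z hz] using hb z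
  have hbS : b ∈ S := by simpa using hmul_mem (z := 1) (by simp)
  have h := hclosed a ha c hc b hbS hac (hmul_mem (by simp)) (hmul_mem (by simp))
  simpa [hone] using sub_mem h (hb (a * c + c * a))

theorem eq_top_of_jordan_closed (hinf : ¬ Module.Finite Z A) (hS : ∀ x y : A, ⁅x, y⁆ ∈ S)
    (hclosed : ∀ a ∈ S, ∀ c ∈ S, ∀ b ∈ S, a * c ∈ S → a * b ∈ S → c * b ∈ S →
      (a * c + c * a) * b ∈ S) : S = ⊤ := by
  by_contra hne
  refine hinf (finite_of_forall_mul_self_mem_span hS fun a ha =>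
    mul_self_mem_span_of_forall_lie hinf fun x => ?_)
  refine mul_add_mul_mem_span_of_jordan_closed hS hne hclosed ha (hS a x) ?_
  convert hS a (a * x) using 1
  simp only [Ring.lie_def]
  noncomm_ring

end JordanClosed

section FiniteGeneration

open scoped Pointwise

theorem exists_finite_subset_adjoin_eq {F B : Type*} [CommSemiring F] [Semiring B] [Algebra F B]
    {s : Set B} (h : (Algebra.adjoin F s).FG) :
    ∃ t ⊆ s, t.Finite ∧ Algebra.adjoin F t = Algebra.adjoin F s := by
  obtain ⟨G, hG⟩ := h
  let fin (t : Finset s) : Set B := (↑) '' (t : Set s)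
  have hunion : s = ⋃ t, fin t := by
    ext x
    simp only [fin, Set.mem_iUnion, Set.mem_image]
    exact ⟨fun hx => ⟨{⟨x, hx⟩}, ⟨x, hx⟩, by simp⟩, fun ⟨_, y, _, hy⟩ => hy ▸ y.2⟩
  have hmono : Monotone fun t => Algebra.adjoin F (fin t) := fun _ _ htu =>
    Algebra.adjoin_mono (Set.image_mono (Finset.coe_subset.2 htu))
  have hmem (x : B) (hx : x ∈ G) : ∃ t, x ∈ Algebra.adjoin F (fin t) := by
    have hx' : x ∈ Algebra.adjoin F s := hG ▸ Algebra.subset_adjoin hx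
    rwa [hunion, Algebra.adjoin_iUnion, ← SetLike.mem_coe,
      Subalgebra.coe_iSup_of_directed hmono.directed_le, Set.mem_iUnion] at hx'
  classical
  choose! t ht using hmem
  refine ⟨fin (G.biUnion t), by simp [fin], (Finset.finite_toSet _).image _,
    le_antisymm (Algebra.adjoin_mono (by simp [fin])) (hG ▸ Algebra.adjoin_le fun x hx => ?_)⟩
  exact hmono (Finset.subset_biUnion_of_mem t hx) (ht x hx)

theorem fg_adjoin_range_of_map_mul_eq_sum {F B D ι : Type*} [CommSemiring F] [Semiring B]
    [Algebra F B] [Algebra.FiniteType F B] [Semiring D] [Algebra F D] [Fintype ι]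
    (φ : B →ₗ[F] D) (X Y : ι → B)
    (hφ : ∀ t u, φ (t * u) = ∑ i, φ (t * X i) * φ (Y i * u)) :
    (Algebra.adjoin F (Set.range φ)).FG := by
  obtain ⟨s, hs⟩ := Algebra.FiniteType.out (R := F) (A := B)
  let X' := insert 1 (Set.range X)
  let Y' := insert 1 (Set.range Y)
  have hX (i : ι) : X i ∈ X' := .inr ⟨i, rfl⟩
  have hY (i : ι) : Y i ∈ Y' := .inr ⟨i, rfl⟩
  let G := Y' * insert 1 (s : Set B) * X'
  have hG : (φ '' G).Finite :=
    ((((Set.finite_range Y).insert 1).mul (s.finite_toSet.insert 1)).mul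
      ((Set.finite_range X).insert 1)).image φ
  let O := Algebra.adjoin F (φ '' G)
  have hGO {y g x : B} (hy : y ∈ Y') (hg : g ∈ insert 1 (s : Set B)) (hx : x ∈ X') :
      φ (y * g * x) ∈ O :=
    Algebra.subset_adjoin ⟨_, Set.mul_mem_mul (Set.mul_mem_mul hy hg) hx, rfl⟩
  let C : Subalgebra F B :=
    { carrier := {r | ∀ y ∈ Y', ∀ x ∈ X', φ (y * r * x) ∈ O}
      mul_mem' := fun {t u} ht hu y hy x hx => by
        rw [← mul_assoc, mul_assoc, hφ]
        refine sum_mem fun i _ => mul_mem (ht y hy _ (hX i)) ?_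
        rw [← mul_assoc]
        exact hu _ (hY i) x hx
      add_mem' := fun ht hu y hy x hx => by
        rw [mul_add, add_mul, map_add]
        exact add_mem (ht y hy x hx) (hu y hy x hx)
      algebraMap_mem' := fun c y hy x hx => by
        rw [Algebra.algebraMap_eq_smul_one, mul_smul_comm, smul_mul_assoc, map_smul]
        exact O.smul_mem (hGO hy (.inl rfl) hx) c }
  have hC : C = ⊤ := top_le_iff.1 (hs ▸ Algebra.adjoin_le fun g hg y hy x hx =>
    hGO hy (.inr hg) hx)
  refine Subalgebra.fg_def.2 ⟨_, hG, le_antisymm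
    (Algebra.adjoin_mono (Set.image_subset_range φ G)) (Algebra.adjoin_le ?_)⟩
  rintro _ ⟨r, rfl⟩
  have hr : r ∈ C := hC ▸ Algebra.mem_top
  simpa using hr 1 (.inl rfl) 1 (.inl rfl)

theorem finiteType_tensorProduct (F A B : Type*) [CommSemiring F] [Semiring A] [Algebra F A]
    [Semiring B] [Algebra F B] [Algebra.FiniteType F A] [Algebra.FiniteType F B] :
    Algebra.FiniteType F (TensorProduct F A B) := by
  let ι₁ : A →ₐ[F] TensorProduct F A B := Algebra.TensorProduct.includeLeft
  let ι₂ : B →ₐ[F] TensorProduct F A B := Algebra.TensorProduct.includeRight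
  have htop : Subalgebra.map ι₁ ⊤ ⊔ Subalgebra.map ι₂ ⊤ = ⊤ := by
    refine top_le_iff.1 (Algebra.TensorProduct.adjoin_tmul_eq_top F A B ▸ Algebra.adjoin_le ?_)
    rintro _ ⟨a, b, rfl⟩
    have ha : ι₁ a ∈ Subalgebra.map ι₁ ⊤ ⊔ Subalgebra.map ι₂ ⊤ :=
      (le_sup_left : Subalgebra.map ι₁ ⊤ ≤ _) ⟨a, Algebra.mem_top, rfl⟩
    have hb : ι₂ b ∈ Subalgebra.map ι₁ ⊤ ⊔ Subalgebra.map ι₂ ⊤ :=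
      (le_sup_right : Subalgebra.map ι₂ ⊤ ≤ _) ⟨b, Algebra.mem_top, rfl⟩
    simpa [ι₁, ι₂] using mul_mem ha hb
  exact ⟨htop ▸ (Algebra.FiniteType.out.map ι₁).sup (Algebra.FiniteType.out.map ι₂)⟩

end FiniteGeneration

section Trace

variable {F B : Type*} [CommSemiring F] [Semiring B] [Algebra F B]

/-- The trace `t ↦ t + σ t` of an algebra endomorphism `σ` with `σ ∘ σ = id`. For the flip of
`A ⊗ A` its values are sums of symmetric tensors `p ⊗ q + q ⊗ p`. -/
def involutionTrace (σ : B →ₐ[F] B) : B →ₗ[F] B :=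
  LinearMap.id + σ.toLinearMap

theorem involutionTrace_apply (σ : B →ₐ[F] B) (t : B) : involutionTrace σ t = t + σ t := rfl

theorem involutionTrace_mul {ι : Type*} [Fintype ι] {σ : B →ₐ[F] B} (hσ : ∀ t, σ (σ t) = t)
    {X Y : ι → B} (hone : ∑ i, X i * Y i = 1) (hzero : ∑ i, X i * σ (Y i) = 0) (t u : B) :
    involutionTrace σ (t * u) = ∑ i, involutionTrace σ (t * X i) * involutionTrace σ (Y i * u) := by
  have hone' : ∑ i, σ (X i) * σ (Y i) = 1 := by simpa using congrArg σ hone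
  have hzero' : ∑ i, σ (X i) * Y i = 0 := by simpa [hσ] using congrArg σ hzero
  have expand (i : ι) : involutionTrace σ (t * X i) * involutionTrace σ (Y i * u) =
      t * (X i * Y i) * u + t * (X i * σ (Y i)) * σ u +
        (σ t * (σ (X i) * Y i) * u + σ t * (σ (X i) * σ (Y i)) * σ u) := by
    simp only [involutionTrace_apply, map_mul, mul_add, add_mul, mul_assoc]
    abel
  simp only [expand, Finset.sum_add_distrib, ← Finset.sum_mul, ← Finset.mul_sum, hone, hzero,
    hone', hzero']
  simp [involutionTrace_apply]

end Trace

section Double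

open scoped TensorProduct

variable {F A : Type*} [CommRing F] [Ring A] [Algebra F A]

variable (F A) in
/-- The flip `a ⊗ b ↦ b ⊗ a`, as an algebra endomorphism of `A ⊗ A`. -/
def tensorFlip : A ⊗[F] A →ₐ[F] A ⊗[F] A :=
  (Algebra.TensorProduct.comm F A A : A ⊗[F] A →ₐ[F] A ⊗[F] A)

@[simp]
theorem tensorFlip_tmul (a b : A) : tensorFlip F A (a ⊗ₜ b) = b ⊗ₜ a := rfl

theorem tensorFlip_tensorFlip (t : A ⊗[F] A) : tensorFlip F A (tensorFlip F A t) = t := by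
  induction t using TensorProduct.induction_on with
  | zero => simp only [map_zero]
  | tmul x y => rfl
  | add x y hx hy => simp only [map_add, hx, hy]

-- Such coordinates exist because the ideal generated by all `t - σ t` contains
-- `⁅p ⊗ 1 - 1 ⊗ p, q ⊗ 1⁆ = ⁅p, q⁆ ⊗ 1`, hence is everything.
theorem exists_galois_coordinates_tensorFlip [IsSimpleRing A] {p q : A} (hpq : ⁅p, q⁆ ≠ 0) :
    ∃ (n : ℕ) (X Y : Fin n × Fin 4 → A ⊗[F] A), ∑ i, X i * Y i = 1 ∧
      ∑ i, X i * tensorFlip F A (Y i) = 0 := by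
  obtain ⟨n, u, v, huv⟩ := exists_sum_mul_mul_eq_one hpq
  let x : Fin 4 → A ⊗[F] A := ![p ⊗ₜ 1, -(1 ⊗ₜ 1), -((q * p) ⊗ₜ 1), q ⊗ₜ 1]
  let y : Fin 4 → A ⊗[F] A := ![q ⊗ₜ 1, q ⊗ₜ p, 1 ⊗ₜ 1, 1 ⊗ₜ p]
  have hxy : ∑ j, x j * y j = ⁅p, q⁆ ⊗ₜ 1 := by
    simp only [x, y, Fin.sum_univ_four, Matrix.cons_val, neg_mul, Ring.lie_def,
      Algebra.TensorProduct.tmul_mul_tmul, one_mul, mul_one, TensorProduct.sub_tmul]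
    abel
  have hxσy : ∑ j, x j * tensorFlip F A (y j) = 0 := by
    simp only [x, y, Fin.sum_univ_four, Matrix.cons_val, neg_mul, tensorFlip_tmul,
      Algebra.TensorProduct.tmul_mul_tmul, one_mul, mul_one]
    abel
  refine ⟨n, fun i => u i.1 ⊗ₜ 1 * x i.2, fun i => y i.2 * v i.1 ⊗ₜ 1, ?_, ?_⟩
  · calc ∑ i : Fin n × Fin 4, u i.1 ⊗ₜ 1 * x i.2 * (y i.2 * v i.1 ⊗ₜ 1)
        = ∑ i, u i ⊗ₜ 1 * (∑ j, x j * y j) * v i ⊗ₜ 1 := by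
          simp only [Fintype.sum_prod_type, Finset.mul_sum, Finset.sum_mul, mul_assoc]
      _ = (∑ i, u i * ⁅p, q⁆ * v i) ⊗ₜ 1 := by
          simp only [hxy, Algebra.TensorProduct.tmul_mul_tmul, one_mul, TensorProduct.sum_tmul]
      _ = 1 := by rw [huv, Algebra.TensorProduct.one_def]
  · calc ∑ i : Fin n × Fin 4, u i.1 ⊗ₜ 1 * x i.2 * tensorFlip F A (y i.2 * v i.1 ⊗ₜ 1)
        = ∑ i, u i ⊗ₜ 1 * (∑ j, x j * tensorFlip F A (y j)) * 1 ⊗ₜ v i := by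
          simp only [Fintype.sum_prod_type, Finset.mul_sum, Finset.sum_mul, mul_assoc, map_mul,
            tensorFlip_tmul]
      _ = 0 := by simp only [hxσy, mul_zero, zero_mul, Finset.sum_const_zero]

variable (F) in
/-- The linear map `a ↦ a ⊗ 1 + 1 ⊗ a`, a homomorphism of Lie algebras `A → A ⊗ A`. -/
def doubleMap : A →ₗ[F] A ⊗[F] A :=
  (Algebra.TensorProduct.includeLeft : A →ₐ[F] A ⊗[F] A).toLinearMap +
    (Algebra.TensorProduct.includeRight : A →ₐ[F] A ⊗[F] A).toLinearMap

theorem doubleMap_apply (a : A) : doubleMap F a = a ⊗ₜ[F] 1 + 1 ⊗ₜ[F] a := rfl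

theorem doubleMap_lie (a b : A) : doubleMap F ⁅a, b⁆ = ⁅doubleMap F a, doubleMap F b⁆ := by
  simp only [doubleMap_apply, Ring.lie_def, mul_add, add_mul, Algebra.TensorProduct.tmul_mul_tmul,
    one_mul, mul_one, TensorProduct.sub_tmul, TensorProduct.tmul_sub]
  abel

theorem tmul_add_tmul_eq_doubleMap (p q : A) :
    p ⊗ₜ[F] q + q ⊗ₜ[F] p = doubleMap F p * doubleMap F q - doubleMap F (p * q) := by
  simp only [doubleMap_apply, mul_add, add_mul, Algebra.TensorProduct.tmul_mul_tmul, one_mul,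
    mul_one]
  abel

theorem tmul_add_tmul_mem {O : Subalgebra F (A ⊗[F] A)} {p q : A} (hp : doubleMap F p ∈ O)
    (hq : doubleMap F q ∈ O) (hpq : doubleMap F (p * q) ∈ O) : p ⊗ₜ[F] q + q ⊗ₜ[F] p ∈ O := by
  rw [tmul_add_tmul_eq_doubleMap]
  exact sub_mem (mul_mem hp hq) hpq

theorem doubleMap_jordan_mem {O : Subalgebra F (A ⊗[F] A)}
    (hO : ∀ x y : A, doubleMap F ⁅x, y⁆ ∈ O) {a c b : A} (ha : doubleMap F a ∈ O)
    (hc : doubleMap F c ∈ O) (hb : doubleMap F b ∈ O) (hac : doubleMap F (a * c) ∈ O)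
    (hab : doubleMap F (a * b) ∈ O) (hcb : doubleMap F (c * b) ∈ O) :
    doubleMap F ((a * c + c * a) * b) ∈ O := by
  have hjordan : doubleMap F (a * c + c * a) ∈ O := by
    convert sub_mem (add_mem hac hac) (hO a c) using 1
    rw [← map_add, ← map_sub, Ring.lie_def]
    congr 1
    abel
  have htmul : (a * c + c * a) ⊗ₜ[F] b + b ⊗ₜ[F] (a * c + c * a) ∈ O := by
    convert sub_mem (add_mem (mul_mem ha (tmul_add_tmul_mem hc hb hcb))
      (mul_mem hc (tmul_add_tmul_mem ha hb hab))) (mul_mem (tmul_add_tmul_mem ha hc hac) hb) using 1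
    simp only [doubleMap_apply, mul_add, add_mul, Algebra.TensorProduct.tmul_mul_tmul, one_mul,
      mul_one, TensorProduct.add_tmul, TensorProduct.tmul_add]
    abel
  rw [tmul_add_tmul_eq_doubleMap] at htmul
  simpa using sub_mem (mul_mem hjordan hb) htmul

theorem lie_doubleMap_mem_adjoin {P : Set A}
    (hP : ∀ p ∈ P, ∀ a : A, ⁅p, a⁆ ∈ Submodule.span F P) (b : A) {t : A ⊗[F] A}
    (ht : t ∈ Algebra.adjoin F (doubleMap F '' P)) :
    ⁅t, doubleMap F b⁆ ∈ Algebra.adjoin F (doubleMap F '' P) := by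
  have hspan : (Submodule.span F P).map (doubleMap F) ≤
      Subalgebra.toSubmodule (Algebra.adjoin F (doubleMap F '' P)) := by
    rw [Submodule.map_span]
    exact Algebra.span_le_adjoin F _
  induction ht using Algebra.adjoin_induction with
  | mem t h =>
    obtain ⟨p, hp, rfl⟩ := h
    rw [← doubleMap_lie]
    exact hspan ⟨_, hP p hp b, rfl⟩
  | algebraMap c =>
    rw [Ring.lie_def, Algebra.commutes, sub_self]
    exact zero_mem _
  | add t u _ _ ht hu =>
    convert add_mem ht hu using 1
    simp only [Ring.lie_def]
    noncomm_ring
  | mul t u ht hu ht' hu' =>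
    convert add_mem (mul_mem ht' hu) (mul_mem ht hu') using 1
    simp only [Ring.lie_def]
    noncomm_ring

variable {Z : Type*} [Field Z] [Algebra Z A] [IsSimpleRing A] [Algebra.IsCentral Z A]

theorem doubleMap_mem_adjoin (hinf : ¬ Module.Finite Z A) {P : Set A}
    (hP : ∀ p ∈ P, ∀ a : A, ⁅p, a⁆ ∈ Submodule.span F P) {p q : A} (hp : p ∈ P) (hq : q ∈ P)
    (hpq : ⁅p, q⁆ ≠ 0) (a : A) : doubleMap F a ∈ Algebra.adjoin F (doubleMap F '' P) := by
  let O := Algebra.adjoin F (doubleMap F '' P)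
  let S : AddSubgroup A := ((Subalgebra.toSubmodule O).comap (doubleMap F)).toAddSubgroup
  have hPS {x : A} (hx : x ∈ P) : x ∈ S := Algebra.subset_adjoin ⟨x, hx, rfl⟩
  have hstable (x : A) (hx : x ∈ S) (y : A) : ⁅x, y⁆ ∈ S := by
    change doubleMap F ⁅x, y⁆ ∈ O
    rw [doubleMap_lie]
    exact lie_doubleMap_mem_adjoin hP y hx
  have hlie (x y : A) : ⁅x, y⁆ ∈ S := lie_mem_of_lie_stable S hstable (hPS hp) (hPS hq) hpq x y
  have htop : S = ⊤ := eq_top_of_jordan_closed (Z := Z) hinf hlie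
    fun a ha c hc b hb hac hab hcb => show doubleMap F ((a * c + c * a) * b) ∈ O from
      doubleMap_jordan_mem hlie ha hc hb hac hab hcb
  exact (htop ▸ AddSubgroup.mem_top a : a ∈ S)

theorem exists_finite_forall_doubleMap_mem_adjoin [Algebra.FiniteType F A]
    (hinf : ¬ Module.Finite Z A) {P : Set A}
    (hP : ∀ p ∈ P, ∀ a : A, ⁅p, a⁆ ∈ Submodule.span F P) {p q : A} (hp : p ∈ P) (hq : q ∈ P)
    (hpq : ⁅p, q⁆ ≠ 0) :
    ∃ Q ⊆ P, Q.Finite ∧ ∀ a, doubleMap F a ∈ Algebra.adjoin F (doubleMap F '' Q) := by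
  have := finiteType_tensorProduct F A A
  let τ := involutionTrace (tensorFlip F A)
  have hd := doubleMap_mem_adjoin (F := F) hinf hP hp hq hpq
  have hτ (t : A ⊗[F] A) : τ t ∈ Algebra.adjoin F (doubleMap F '' P) := by
    induction t using TensorProduct.induction_on with
    | zero => rw [map_zero]; exact zero_mem _
    | tmul x y => exact tmul_add_tmul_mem (hd x) (hd y) (hd _)
    | add x y hx hy => rw [map_add]; exact add_mem hx hy
  have hadjoin : Algebra.adjoin F (Set.range τ) = Algebra.adjoin F (doubleMap F '' P) :=
    le_antisymm (Algebra.adjoin_le (Set.range_subset_iff.2 hτ))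
      (Algebra.adjoin_mono (Set.image_subset_iff.2 fun a _ => ⟨a ⊗ₜ 1, rfl⟩))
  obtain ⟨n, X, Y, hone, hzero⟩ := exists_galois_coordinates_tensorFlip (F := F) hpq
  obtain ⟨T, hTP, hT, hTadjoin⟩ := exists_finite_subset_adjoin_eq (hadjoin ▸
    fg_adjoin_range_of_map_mul_eq_sum τ X Y (involutionTrace_mul tensorFlip_tensorFlip hone hzero))
  obtain ⟨Q, hQP, hQ, rfl⟩ := Set.exists_subset_image_finite_and.1 ⟨T, hTP, hT, rfl⟩
  exact ⟨Q, hQP, hQ, fun a => hTadjoin ▸ hd a⟩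

end Double

section Corner

variable {R : Type*} [Ring R] {e : R} {he : IsIdempotentElem e}

/-- The inclusion of the corner ring `e R e` in `R`. -/
@[coe]
def cornerCoe (a : he.Corner) : R :=
  Subtype.val (p := (· ∈ Subsemigroup.corner e)) a

instance : CoeOut he.Corner R := ⟨cornerCoe⟩

theorem corner_ext {a b : he.Corner} (h : (a : R) = b) : a = b := Subtype.ext h

theorem coe_corner_mul (a b : he.Corner) : ((a * b : he.Corner) : R) = a * b := rfl

theorem coe_corner_add (a b : he.Corner) : ((a + b : he.Corner) : R) = a + b := rfl

theorem coe_corner_sub (a b : he.Corner) : ((a - b : he.Corner) : R) = a - b := rfl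

theorem coe_corner_one : ((1 : he.Corner) : R) = e := rfl

theorem coe_corner_zero : ((0 : he.Corner) : R) = 0 := rfl

theorem coe_corner_sum {ι : Type*} (s : Finset ι) (f : ι → he.Corner) :
    ((∑ i ∈ s, f i : he.Corner) : R) = ∑ i ∈ s, (f i : R) :=
  map_sum (AddMonoidHom.mk' (cornerCoe (he := he)) coe_corner_add) f s

theorem mul_coe_corner (a : he.Corner) : e * (a : R) = a :=
  ((Subsemigroup.mem_corner_iff he).1 a.2).1

theorem coe_corner_mul_self (a : he.Corner) : (a : R) * e = a :=
  ((Subsemigroup.mem_corner_iff he).1 a.2).2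

variable {k : Type*} [CommRing k] [Algebra k R]

/-- The `k`-algebra structure of the corner ring `e R e` inherited from `R`, with unit `e`. -/
instance cornerAlgebra : Algebra k he.Corner :=
  letI : Module k he.Corner :=
    { smul := fun c a => ⟨c • (a : R), c • (a : R), by
        simp only [mul_smul_comm, smul_mul_assoc, mul_coe_corner, coe_corner_mul_self]⟩
      one_smul := fun a => corner_ext (one_smul k (a : R))
      mul_smul := fun c d a => corner_ext (mul_smul c d (a : R))
      smul_zero := fun c => corner_ext (smul_zero c)
      smul_add := fun c a b => corner_ext (smul_add c (a : R) b)
      add_smul := fun c d a => corner_ext (add_smul c d (a : R))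
      zero_smul := fun a => corner_ext (zero_smul k (a : R)) }
  Algebra.ofModule (fun c a b => corner_ext (smul_mul_assoc c (a : R) b))
    (fun c a b => corner_ext (mul_smul_comm c (a : R) b))

theorem coe_corner_smul (c : k) (a : he.Corner) : ((c • a : he.Corner) : R) = c • (a : R) := rfl

variable (he k) in
/-- The projection `r ↦ e r e` of `R` onto the corner ring `e R e`. -/
def toCorner : R →ₗ[k] he.Corner where
  toFun r := ⟨e * r * e, r, rfl⟩
  map_add' a b := corner_ext (by
    change e * (a + b) * e = e * a * e + e * b * e
    rw [mul_add, add_mul])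
  map_smul' c a := corner_ext (by
    change e * (c • a) * e = c • (e * a * e)
    rw [mul_smul_comm, smul_mul_assoc])

theorem coe_toCorner (r : R) : (toCorner he k r : R) = e * r * e := rfl

theorem toCorner_coe (a : he.Corner) : toCorner he k a = a :=
  corner_ext (by rw [coe_toCorner, mul_coe_corner, coe_corner_mul_self])

theorem toCorner_mul_eq_sum {n : ℕ} {x y : Fin n → R} (hxy : ∑ i, x i * e * y i = 1) (t u : R) :
    toCorner he k (t * u) = ∑ i, toCorner he k (t * x i) * toCorner he k (y i * u) := by
  refine corner_ext ?_
  simp only [coe_corner_sum, coe_corner_mul, coe_toCorner]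
  calc e * (t * u) * e = e * (t * (∑ i, x i * e * y i) * u) * e := by rw [hxy, mul_one]
    _ = ∑ i, e * (t * x i) * (e * e) * (y i * u) * e := by
      simp only [he.eq, Finset.mul_sum, Finset.sum_mul, mul_assoc]
    _ = _ := by simp only [mul_assoc]

theorem one_eq_sum_toCorner_mul_mul {n : ℕ} {x y : Fin n → R} {a : he.Corner}
    (hxy : ∑ i, x i * a * y i = 1) : 1 = ∑ i, toCorner he k (x i) * a * toCorner he k (y i) := by
  refine corner_ext ?_
  simp only [coe_corner_sum, coe_corner_mul, coe_toCorner, coe_corner_one]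
  calc e = e * (∑ i, x i * a * y i) * e := by rw [hxy, mul_one, he.eq]
    _ = ∑ i, e * x i * (e * a * e) * (y i * e) := by
      simp only [mul_coe_corner, coe_corner_mul_self, Finset.mul_sum, Finset.sum_mul, mul_assoc]
    _ = _ := by simp only [mul_assoc]

variable [IsSimpleRing R]

theorem isSimpleRing_corner (he0 : e ≠ 0) : IsSimpleRing he.Corner := by
  refine isSimpleRing_iff_isTwoSided_imp.2 ⟨⟨⟨0, 1, fun h => he0 (congrArg cornerCoe h).symm⟩⟩,
    fun I hI => or_iff_not_imp_left.2 fun hbot => ?_⟩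
  obtain ⟨a, haI, ha⟩ := Submodule.exists_mem_ne_zero_of_ne_bot hbot
  obtain ⟨n, x, y, hxy⟩ := exists_sum_mul_mul_eq_one fun h : (a : R) = 0 => ha (corner_ext h)
  rw [Ideal.eq_top_iff_one, one_eq_sum_toCorner_mul_mul (k := ℤ) hxy]
  exact sum_mem fun i _ => I.mul_mem_right _ (I.mul_mem_left _ haI)

theorem two_ne_zero_corner (he0 : e ≠ 0) (h2 : (2 : R) ≠ 0) : (2 : he.Corner) ≠ 0 := by
  have h2' : IsUnit (2 : R) := isUnit_of_forall_commute h2 fun x => .ofNat_left 2 x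
  intro h
  have h2e : 2 * e = 0 := by
    rw [two_mul, ← coe_corner_zero (he := he), ← h, ← one_add_one_eq_two]
    rfl
  exact he0 (h2'.mul_right_eq_zero.1 h2e)

theorem finiteType_corner [Algebra.FiniteType k R] (he0 : e ≠ 0) :
    Algebra.FiniteType k he.Corner := by
  obtain ⟨n, x, y, hxy⟩ := exists_sum_mul_mul_eq_one he0
  have hsurj : Set.range (toCorner he k) = Set.univ :=
    Set.eq_univ_of_forall fun a => ⟨a, toCorner_coe a⟩
  have hfg := fg_adjoin_range_of_map_mul_eq_sum (toCorner he k) x y (toCorner_mul_eq_sum hxy)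
  rw [hsurj, Algebra.adjoin_univ] at hfg
  exact ⟨hfg⟩

theorem finite_of_finite_corner (he0 : e ≠ 0) (h : Module.Finite k he.Corner) :
    Module.Finite k R := by
  let ι : he.Corner →ₗ[k] R := ⟨⟨cornerCoe, coe_corner_add⟩, coe_corner_smul⟩
  exact finite_of_forall_mul_mul_mem he0 he0 (h.1.map ι) fun x => ⟨toCorner he k x, trivial, rfl⟩

theorem isCentral_corner {Z : Type*} [Field Z] [Algebra Z R] [Algebra.IsCentral Z R]
    (he0 : e ≠ 0) : Algebra.IsCentral Z he.Corner := by
  refine ⟨fun z hz => Algebra.mem_bot.2 ?_⟩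
  have hcomm (x : R) : e * x * z = z * x * e := by
    have h := congrArg cornerCoe (Subalgebra.mem_center_iff.1 hz (toCorner he ℤ x))
    rw [coe_corner_mul, coe_corner_mul, coe_toCorner, mul_assoc, mul_coe_corner] at h
    rw [h, ← mul_assoc, ← mul_assoc, coe_corner_mul_self]
  obtain ⟨w, hw, hzw⟩ := exists_eq_mul_of_forall_mul_mul_comm he0 hcomm
  obtain ⟨c, rfl⟩ := Submodule.mem_span_singleton.1
    (mem_span_one_of_forall_lie_eq_zero (Z := Z) hw)
  refine ⟨c, corner_ext ?_⟩
  rw [Algebra.algebraMap_eq_smul_one, coe_corner_smul, coe_corner_one, hzw, smul_one_mul]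

end Corner

section SkewPeirce

open scoped TensorProduct

variable {F R : Type*} [CommRing F] [Star F] [TrivialStar F] [Ring R] [StarRing R] [Algebra F R]
  [StarModule F R]

variable (F) in
/-- The skew-symmetric elements of the Peirce component `e R e*`, where `e` is an idempotent. For
skew `k` the condition `e k = k` also gives `k e* = k`. -/
def skewPeirce (e : R) : Submodule F R where
  carrier := {k | star k = -k ∧ e * k = k}
  add_mem' := fun ⟨h₁, h₂⟩ ⟨h₃, h₄⟩ =>
    ⟨by rw [star_add, h₁, h₃, neg_add], by rw [mul_add, h₂, h₄]⟩
  zero_mem' := ⟨by rw [star_zero, neg_zero], mul_zero e⟩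
  smul_mem' c _ := fun ⟨h₁, h₂⟩ =>
    ⟨by rw [star_smul, h₁, star_trivial, smul_neg], by rw [mul_smul_comm, h₂]⟩

variable {e : R}

theorem mul_star_of_mem_skewPeirce {k : R} (hk : k ∈ skewPeirce F e) : k * star e = k := by
  simpa [hk.1] using congrArg star hk.2

theorem mul_of_mem_skewPeirce_star {k : R} (hk : k ∈ skewPeirce F (star e)) : k * e = k := by
  simpa using mul_star_of_mem_skewPeirce hk

theorem coe_skewPeirce (he : IsIdempotentElem e) :
    (skewPeirce F e : Set R) = {a | star a = -a ∧ ∃ r, a = e * r * star e} := by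
  ext k
  refine ⟨fun hk => ⟨hk.1, k, by rw [hk.2, mul_star_of_mem_skewPeirce hk]⟩, ?_⟩
  rintro ⟨hk, r, rfl⟩
  exact ⟨hk, by simp only [← mul_assoc, he.eq]⟩

theorem sub_star_mem_skewPeirce {m : R} (hm : e * m = m) (hm' : m * star e = m) :
    m - star m ∈ skewPeirce F e := by
  have : e * star m = star m := by simpa using congrArg star hm'
  exact ⟨by rw [star_sub, star_star, neg_sub], by rw [mul_sub, hm, this]⟩

theorem mul_add_mul_star_mem_skewPeirce {k a : R} (hk : k ∈ skewPeirce F e) (ha : e * a = a) :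
    a * k + k * star a ∈ skewPeirce F e := by
  refine ⟨?_, by rw [mul_add, ← mul_assoc, ← mul_assoc, ha, hk.2]⟩
  simp only [star_add, star_mul, star_star, hk.1]
  noncomm_ring

theorem mul_mul_star_mem_skewPeirce {k a : R} (hk : k ∈ skewPeirce F e) (ha : e * a = a) :
    a * k * star a ∈ skewPeirce F e := by
  refine ⟨?_, by rw [← mul_assoc, ← mul_assoc, ha]⟩
  simp only [star_mul, star_star, hk.1]
  noncomm_ring

theorem mul_add_star_mul_mem_skewPeirce_star {k a : R} (hk : k ∈ skewPeirce F (star e))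
    (ha : a * e = a) : k * a + star a * k ∈ skewPeirce F (star e) := by
  have ha' : star e * star a = star a := by rw [← star_mul, ha]
  simpa [add_comm] using mul_add_mul_star_mem_skewPeirce hk ha'

theorem exists_add_self_eq_of_mem_skewPeirce [IsSimpleRing R] (h2 : (2 : R) ≠ 0) {k : R}
    (hk : k ∈ skewPeirce F e) : ∃ l ∈ skewPeirce F e, l + l = k := by
  have h2' : IsUnit (2 : R) := isUnit_of_forall_commute h2 fun x => .ofNat_left 2 x
  obtain ⟨l, rfl⟩ : ∃ l, l + l = k := by
    obtain ⟨u, hu⟩ := h2'.exists_right_inv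
    exact ⟨u * k, by rw [← two_mul, ← mul_assoc, hu, one_mul]⟩
  refine ⟨l, ⟨h2'.mul_left_cancel ?_, h2'.mul_left_cancel ?_⟩, rfl⟩
  · simpa [two_mul] using hk.1
  · simpa [two_mul, mul_add] using hk.2

section Commutative

variable [IsSimpleRing R]

theorem mul_comm_of_skewPeirce_eq_bot (he : IsIdempotentElem e) (he0 : e ≠ 0)
    (hbot : skewPeirce F e = ⊥) {a c : R} (ha : e * a = a) (ha' : a * e = a) (hc : e * c = c)
    (hc' : c * e = c) : a * c = c * a := by
  have hsymm {m : R} (hm : e * m = m) (hm' : m * star e = m) : star m = m :=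
    (sub_eq_zero.1 ((Submodule.mem_bot F).1 (hbot ▸ sub_star_mem_skewPeirce hm hm'))).symm
  have hmove {b m : R} (hb : e * b = b) (hm : e * m = m) (hm' : m * star e = m) :
      b * m = m * star b := by
    rw [← hsymm (m := b * m) (by rw [← mul_assoc, hb]) (by rw [mul_assoc, hm']), star_mul,
      hsymm hm hm']
  have hee : star e * star e = star e := he.star.eq
  by_contra hac
  refine star_ne_zero.2 he0 (eq_zero_of_forall_mul_mul_eq_zero (sub_ne_zero.2 hac) fun r => ?_)
  let m := e * r * star e
  have hm : e * m = m := by simp only [m, ← mul_assoc, he.eq]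
  have hm' : m * star e = m := by simp only [m, mul_assoc, hee]
  have hcomm : a * c * m = c * a * m :=
    calc a * c * m = a * m * star c := by rw [mul_assoc, hmove hc hm hm', ← mul_assoc]
      _ = m * star (c * a) := by rw [hmove ha hm hm', star_mul, mul_assoc]
      _ = c * a * m := (hmove (by rw [← mul_assoc, hc]) hm hm').symm
  calc (a * c - c * a) * r * star e = a * (c * e) * r * star e - c * (a * e) * r * star e := by
        rw [ha', hc', sub_mul, sub_mul]
    _ = a * c * m - c * a * m := by simp only [m, mul_assoc]
    _ = 0 := by rw [hcomm, sub_self]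

theorem mul_comm_of_forall_skewPeirce_mul_eq_zero (he : IsIdempotentElem e)
    (h : ∀ k ∈ skewPeirce F e, ∀ l ∈ skewPeirce F (star e), k * l = 0) {k : R}
    (hk : k ∈ skewPeirce F e) (hk0 : k ≠ 0) {a c : R} (ha : e * a = a) (ha' : a * e = a)
    (hc : e * c = c) (hc' : c * e = c) : a * c = c * a := by
  have hsymm {l n : R} (hl : l ∈ skewPeirce F e) (hn : star e * n = n) (hn' : n * e = n) :
      l * n = l * star n := by
    rw [← sub_eq_zero, ← mul_sub]
    exact h l hl _ (sub_star_mem_skewPeirce hn (by rwa [star_star]))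
  have hmove {n : R} (hn : star e * n = n) (hn' : n * e = n) : k * star a * n = k * n * a := by
    have hadd := hsymm (mul_add_mul_star_mem_skewPeirce hk ha) hn hn'
    rw [add_mul, add_mul, mul_assoc a, mul_assoc a, hsymm hk hn hn', add_right_inj] at hadd
    rw [hadd, mul_assoc, ← star_mul, mul_assoc,
      hsymm hk (n := n * a) (by rw [← mul_assoc, hn]) (by rw [mul_assoc, ha'])]
  have hee : star e * star e = star e := he.star.eq
  refine sub_eq_zero.1 (eq_zero_of_forall_mul_mul_eq_zero hk0 fun r => ?_)
  let n := star e * r * e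
  have hn : star e * n = n := by simp only [n, ← mul_assoc, hee]
  have hn' : n * e = n := by simp only [n, mul_assoc, he.eq]
  have hcomm : k * n * (a * c) = k * n * (c * a) :=
    calc k * n * (a * c) = k * star a * n * c := by rw [hmove hn hn', ← mul_assoc]
      _ = k * star a * (n * c) := mul_assoc ..
      _ = k * (n * c) * a := hmove (by rw [← mul_assoc, hn]) (by rw [mul_assoc, hc'])
      _ = k * n * (c * a) := by simp only [mul_assoc]
  calc k * r * (a * c - c * a) = k * star e * r * (e * a * c - e * c * a) := by
        rw [mul_star_of_mem_skewPeirce hk, ha, hc]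
    _ = k * n * (a * c) - k * n * (c * a) := by simp only [n, mul_sub, mul_assoc]
    _ = 0 := by rw [hcomm, sub_self]

end Commutative

section Products

variable {he : IsIdempotentElem e}

variable (F he) in
/-- The products `k l` in the corner ring `e R e` of skew-symmetric elements `k` of `e R e*` and `l`
of `e* R e`. -/
def skewProducts : Set he.Corner :=
  {p | ∃ k ∈ skewPeirce F e, ∃ l ∈ skewPeirce F (star e), (p : R) = k * l}

theorem coe_toCorner_mul {k l : R} (hk : k ∈ skewPeirce F e) (hl : l ∈ skewPeirce F (star e)) :
    (toCorner he F (k * l) : R) = k * l := by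
  rw [coe_toCorner, ← mul_assoc, hk.2, mul_assoc, mul_of_mem_skewPeirce_star hl]

theorem toCorner_mul_mem_skewProducts {k l : R} (hk : k ∈ skewPeirce F e)
    (hl : l ∈ skewPeirce F (star e)) : toCorner he F (k * l) ∈ skewProducts F he :=
  ⟨k, hk, l, hl, coe_toCorner_mul hk hl⟩

theorem lie_mem_span_skewProducts {p : he.Corner} (hp : p ∈ skewProducts F he) (a : he.Corner) :
    ⁅p, a⁆ ∈ Submodule.span F (skewProducts F he) := by
  obtain ⟨k, hk, l, hl, hkl⟩ := hp
  have hl' := mul_add_star_mul_mem_skewPeirce_star hl (coe_corner_mul_self a)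
  have hk' := mul_add_mul_star_mem_skewPeirce hk (mul_coe_corner a)
  have : ⁅p, a⁆ = toCorner he F (k * (l * a + star (a : R) * l)) -
      toCorner he F ((a * k + k * star (a : R)) * l) := by
    refine corner_ext ?_
    rw [Ring.lie_def, coe_corner_sub, coe_corner_sub, coe_toCorner_mul hk hl',
      coe_toCorner_mul hk' hl, coe_corner_mul, coe_corner_mul, hkl]
    noncomm_ring
  rw [this]
  exact sub_mem (Submodule.subset_span (toCorner_mul_mem_skewProducts hk hl'))
    (Submodule.subset_span (toCorner_mul_mem_skewProducts hk' hl))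

theorem lie_eq_zero_of_forall_skewProducts_lie_eq_zero [IsSimpleRing R] (he0 : e ≠ 0)
    (h2 : (2 : R) ≠ 0) {p : he.Corner} (hp : p ∈ skewProducts F he)
    (h : ∀ q ∈ skewProducts F he, ⁅p, q⁆ = 0) (a : he.Corner) : ⁅p, a⁆ = 0 := by
  have := isSimpleRing_corner (he := he) he0
  have hspan : Submodule.span F (skewProducts F he) ≤
      LinearMap.ker (LinearMap.mulLeft F p - LinearMap.mulRight F p) := Submodule.span_le.2 h
  exact lie_eq_zero_of_lie_lie_eq_zero (two_ne_zero_corner he0 h2)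
    (fun x => hspan (lie_mem_span_skewProducts hp x)) a

variable {Z : Type*} [Field Z] [Algebra Z R]

theorem mul_self_mem_span_of_skewPeirce_mul_eq_smul
    (h : ∀ k ∈ skewPeirce F e, ∀ l ∈ skewPeirce F (star e), ∃ c : Z, k * l = c • e) {k l : R}
    (hk : k ∈ skewPeirce F e) (hl : l ∈ skewPeirce F (star e)) (hkl : k * l ≠ 0)
    (a : he.Corner) : a * a ∈ Submodule.span Z {1, a} := by
  obtain ⟨c, hc⟩ := h k hk l hl
  have hc0 : c ≠ 0 := by
    rintro rfl
    exact hkl (by rw [hc, zero_smul])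
  obtain ⟨α, hα⟩ := h _ (mul_add_mul_star_mem_skewPeirce hk (mul_coe_corner a)) l hl
  obtain ⟨β, hβ⟩ := h _ (mul_mul_star_mem_skewPeirce hk (mul_coe_corner a)) l hl
  rw [add_mul, mul_assoc, hc, mul_smul_comm, coe_corner_mul_self] at hα
  have hka : k * star (a : R) * l = α • e - c • (a : R) := eq_sub_of_add_eq' hα
  have hquad : c • ((a : R) * a) = α • (a : R) - β • e := by
    rw [← hβ, mul_assoc (a : R), mul_assoc (a : R), hka, mul_sub, mul_smul_comm, mul_smul_comm,
      coe_corner_mul_self, sub_sub_cancel]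
  refine Submodule.mem_span_pair.2 ⟨-(c⁻¹ * β), c⁻¹ * α, corner_ext ?_⟩
  change (-(c⁻¹ * β)) • e + (c⁻¹ * α) • (a : R) = a * a
  rw [← one_smul Z ((a : R) * a), ← inv_mul_cancel₀ hc0, mul_smul c⁻¹ c, hquad]
  module

variable [IsSimpleRing R] [Algebra.IsCentral Z R]

theorem finite_corner_of_forall_skewPeirce_mul_eq_smul (he0 : e ≠ 0)
    (h : ∀ k ∈ skewPeirce F e, ∀ l ∈ skewPeirce F (star e), ∃ c : Z, k * l = c • e) :
    Module.Finite Z he.Corner := by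
  have := isSimpleRing_corner (he := he) he0
  have := isCentral_corner (Z := Z) (he := he) he0
  by_cases hzero : ∀ k ∈ skewPeirce F e, ∀ l ∈ skewPeirce F (star e), k * l = 0
  · by_contra hinf
    obtain ⟨a, c, hac⟩ := exists_lie_ne_zero_of_not_finite hinf
    refine hac (sub_eq_zero.2 (corner_ext ?_))
    by_cases hbot : skewPeirce F e = ⊥
    · exact mul_comm_of_skewPeirce_eq_bot he he0 hbot (mul_coe_corner a) (coe_corner_mul_self a)
        (mul_coe_corner c) (coe_corner_mul_self c)
    · obtain ⟨k, hk, hk0⟩ := Submodule.exists_mem_ne_zero_of_ne_bot hbot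
      exact mul_comm_of_forall_skewPeirce_mul_eq_zero he hzero hk hk0 (mul_coe_corner a)
        (coe_corner_mul_self a) (mul_coe_corner c) (coe_corner_mul_self c)
  · push Not at hzero
    obtain ⟨k, hk, l, hl, hkl⟩ := hzero
    exact finite_of_forall_mul_self_mem_span (S := ⊤) (fun _ _ => AddSubgroup.mem_top _)
      fun a _ => mul_self_mem_span_of_skewPeirce_mul_eq_smul h hk hl hkl a

theorem exists_skewProducts_lie_ne_zero (he0 : e ≠ 0) (h2 : (2 : R) ≠ 0)
    (hinf : ¬ Module.Finite Z R) :
    ∃ p ∈ skewProducts F he, ∃ q ∈ skewProducts F he, ⁅p, q⁆ ≠ 0 := by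
  have := isCentral_corner (Z := Z) (he := he) he0
  by_contra! hcomm
  refine hinf (finite_of_finite_corner he0
    (finite_corner_of_forall_skewPeirce_mul_eq_smul (F := F) (he := he) he0 fun k hk l hl => ?_))
  have hp := toCorner_mul_mem_skewProducts (he := he) hk hl
  obtain ⟨c, hc⟩ := Submodule.mem_span_singleton.1 (mem_span_one_of_forall_lie_eq_zero (Z := Z)
    (lie_eq_zero_of_forall_skewProducts_lie_eq_zero he0 h2 hp (hcomm _ hp)))
  exact ⟨c, by rw [← coe_toCorner_mul (he := he) hk hl, ← hc, coe_corner_smul, coe_corner_one]⟩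

end Products

section TensorAction

variable {he : IsIdempotentElem e}

variable (F he) in
/-- The action `(p ⊗ q) m = p m q*` of `e R e ⊗ e R e` on `R`. On skew-symmetric elements `k` of
`e R e*` the tensor `a ⊗ 1 + 1 ⊗ a` acts by `k ↦ a k + k a*`. -/
def tensorAct : he.Corner ⊗[F] he.Corner →ₗ[F] R →ₗ[F] R :=
  TensorProduct.lift (LinearMap.mk₂ F
    (fun p q => LinearMap.mulLeft F (p : R) ∘ₗ LinearMap.mulRight F (star (q : R)))
    (fun p p' q => LinearMap.ext fun m => add_mul (p : R) p' _)
    (fun c p q => LinearMap.ext fun m => smul_mul_assoc c (p : R) _)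
    (fun p q q' => LinearMap.ext fun m => by simp [coe_corner_add, mul_add])
    (fun c p q => LinearMap.ext fun m => by simp [coe_corner_smul, star_smul]))

theorem tensorAct_tmul (p q : he.Corner) (m : R) :
    tensorAct F he (p ⊗ₜ q) m = p * (m * star (q : R)) := rfl

theorem tensorAct_mul (t u : he.Corner ⊗[F] he.Corner) (m : R) :
    tensorAct F he (t * u) m = tensorAct F he t (tensorAct F he u m) := by
  induction t using TensorProduct.induction_on with
  | zero => simp
  | add x y hx hy => simp [add_mul, hx, hy]
  | tmul p q =>
    induction u using TensorProduct.induction_on with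
    | zero => simp
    | add x y hx hy => simp [mul_add, hx, hy]
    | tmul p' q' =>
      simp only [Algebra.TensorProduct.tmul_mul_tmul, tensorAct_tmul, coe_corner_mul, star_mul,
        mul_assoc]

variable (he) in
/-- The subalgebra of elements of `e R e ⊗ e R e` whose action preserves `V`. -/
def tensorStabilizer {V : Submodule F R} (hV : V ≤ skewPeirce F e) :
    Subalgebra F (he.Corner ⊗[F] he.Corner) where
  carrier := {t | ∀ v ∈ V, tensorAct F he t v ∈ V}
  mul_mem' := fun {t u} ht hu v hv => by
    rw [tensorAct_mul]
    exact ht _ (hu v hv)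
  add_mem' := fun {t u} ht hu v hv => by
    rw [map_add, LinearMap.add_apply]
    exact add_mem (ht v hv) (hu v hv)
  algebraMap_mem' c v hv := by
    rw [Algebra.algebraMap_eq_smul_one, map_smul, LinearMap.smul_apply,
      Algebra.TensorProduct.one_def, tensorAct_tmul, coe_corner_one,
      mul_star_of_mem_skewPeirce (hV hv), (hV hv).2]
    exact V.smul_mem c hv

theorem exists_eq_sum_mul_mul_star [IsSimpleRing R] {v k : R} (hv : v ∈ skewPeirce F e)
    (hv0 : v ≠ 0) (hk : k ∈ skewPeirce F e) :
    ∃ (n : ℕ) (b d : Fin n → he.Corner), k = ∑ i, b i * v * star (d i : R) := by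
  obtain ⟨n, x, y, hxy⟩ := exists_sum_mul_mul_eq_one hv0
  refine ⟨n, fun i => toCorner he F (k * x i), fun i => toCorner he F (star (y i)), ?_⟩
  simp only [coe_toCorner, star_mul, star_star]
  calc k = k * (∑ i, x i * v * y i) * star e := by
        rw [hxy, mul_one, mul_star_of_mem_skewPeirce hk]
    _ = ∑ i, e * k * x i * (e * v * star e) * y i * star e := by
        rw [hk.2, hv.2, mul_star_of_mem_skewPeirce hv]
        simp only [Finset.mul_sum, Finset.sum_mul, mul_assoc]
    _ = _ := by simp only [mul_assoc]

theorem skewPeirce_le_of_forall_doubleMap_mem [IsSimpleRing R] (h2 : (2 : R) ≠ 0)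
    {V : Submodule F R} (hV : V ≤ skewPeirce F e)
    (hstab : ∀ a, doubleMap F a ∈ tensorStabilizer he hV) {v : R} (hv : v ∈ V) (hv0 : v ≠ 0) :
    skewPeirce F e ≤ V := by
  intro k hk
  obtain ⟨l, hl, rfl⟩ := exists_add_self_eq_of_mem_skewPeirce h2 hk
  obtain ⟨n, b, d, hbd⟩ := exists_eq_sum_mul_mul_star (he := he) (hV hv) hv0 hl
  have hdb : l = ∑ i, d i * v * star (b i : R) := by
    have := congrArg star hbd
    simpa [hl.1, (hV hv).1, mul_assoc] using this
  have hmem (a c : he.Corner) : a * v * star (c : R) + c * v * star (a : R) ∈ V := by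
    have := tmul_add_tmul_mem (hstab a) (hstab c) (hstab _) v hv
    simpa only [map_add, LinearMap.add_apply, tensorAct_tmul, mul_assoc] using this
  have hsum : l + l = ∑ i, (b i * v * star (d i : R) + d i * v * star (b i : R)) := by
    rw [Finset.sum_add_distrib, ← hbd, ← hdb]
  exact hsum ▸ sum_mem fun i _ => hmem _ _

theorem doubleMap_mem_tensorStabilizer {V : Submodule F R} (hV : V ≤ skewPeirce F e)
    {p : he.Corner} {k l : R} (hk : k ∈ skewPeirce F e) (hl : l ∈ skewPeirce F (star e))
    (hp : (p : R) = k * l) (h : ∀ v ∈ V, k * l * v + v * l * k ∈ V) :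
    doubleMap F p ∈ tensorStabilizer he hV := by
  intro v hv
  have hstar : star (p : R) = l * k := by rw [hp, star_mul, hk.1, hl.1, neg_mul_neg]
  rw [doubleMap_apply, map_add, LinearMap.add_apply, tensorAct_tmul, tensorAct_tmul,
    coe_corner_one, hstar, mul_star_of_mem_skewPeirce (hV hv), hp, ← mul_assoc e, (hV hv).2,
    ← mul_assoc v]
  exact h v hv

end TensorAction

theorem exists_finite_forall_skewPeirce_le {Z : Type*} [Field Z] [Algebra Z R] [IsSimpleRing R]
    [Algebra.IsCentral Z R] [Algebra.FiniteType F R] (hinf : ¬ Module.Finite Z R)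
    (h2 : (2 : R) ≠ 0) (he : IsIdempotentElem e) (he0 : e ≠ 0) :
    ∃ S T : Set R, S.Finite ∧ T.Finite ∧ S ⊆ skewPeirce F e ∧ T ⊆ skewPeirce F (star e) ∧
      ∀ V W : Submodule F R, V ≤ skewPeirce F e → S ⊆ V → T ⊆ W →
        (∀ a ∈ V, ∀ b ∈ W, ∀ c ∈ V, a * b * c + c * b * a ∈ V) → skewPeirce F e ≤ V := by
  have := isSimpleRing_corner (he := he) he0
  have := isCentral_corner (Z := Z) (he := he) he0
  have := finiteType_corner (k := F) (he := he) he0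
  obtain ⟨p, hp, q, hq, hpq⟩ :=
    exists_skewProducts_lie_ne_zero (F := F) (he := he) he0 h2 hinf
  obtain ⟨Q, hQP, hQ, hQadjoin⟩ := exists_finite_forall_doubleMap_mem_adjoin
    (fun h => hinf (finite_of_finite_corner he0 h)) (fun _ => lie_mem_span_skewProducts) hp hq hpq
  obtain ⟨k₀, hk₀, l₀, -, hkl₀⟩ := hp
  have hk₀0 : k₀ ≠ 0 := by
    rintro rfl
    obtain rfl : p = 0 := corner_ext (by rw [hkl₀, zero_mul, coe_corner_zero])
    exact hpq (by rw [Ring.lie_def, zero_mul, mul_zero, sub_self])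
  choose! κ hκ μ hμ hκμ using fun p (hp : p ∈ Q) => hQP hp
  refine ⟨insert k₀ (κ '' Q), μ '' Q, (hQ.image _).insert _, hQ.image _,
    Set.insert_subset hk₀ (Set.image_subset_iff.2 hκ),
    Set.image_subset_iff.2 hμ, fun V W hV hS hT hclosed => ?_⟩
  have hQstab : Algebra.adjoin F (doubleMap F '' Q) ≤ tensorStabilizer he hV := by
    refine Algebra.adjoin_le (Set.image_subset_iff.2 fun p hp => ?_)
    exact doubleMap_mem_tensorStabilizer hV (hκ p hp) (hμ p hp) (hκμ p hp)
      (hclosed _ (hS (.inr ⟨p, hp, rfl⟩)) _ (hT ⟨p, hp, rfl⟩))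
  exact skewPeirce_le_of_forall_doubleMap_mem h2 hV (fun a => hQstab (hQadjoin a))
    (hS (.inl rfl)) hk₀0

end SkewPeirce

theorem finite_of_finiteType_of_finite (F : Type*) {Z A : Type*} [CommRing F]
    [IsNoetherianRing F] [IsJacobsonRing F] [Field Z] [Ring A] [Algebra F Z] [Algebra Z A]
    [Algebra F A] [IsScalarTower F Z A] [Nontrivial A] [Algebra.FiniteType F A]
    [Module.Finite Z A] : Module.Finite F A := by
  have hfg : (⊤ : Subalgebra F Z).FG := by
    obtain ⟨B, hB, hfin⟩ := exists_subalgebra_of_fg F Z A Algebra.FiniteType.out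
      (Module.Finite.fg_top (R := Z) (M := A))
    have := isNoetherianRing_of_fg hB
    have : Module.Finite B A := ⟨hfin⟩
    refine Algebra.fg_trans' (B.fg_top.2 hB) (Subalgebra.fg_of_submodule_fg ?_)
    exact fg_of_injective (IsScalarTower.toAlgHom B Z A).toLinearMap
      (algebraMap Z A).injective
  have : Algebra.FiniteType F Z := ⟨hfg⟩
  have := finite_of_finite_type_of_isJacobsonRing F Z
  exact .trans Z A

section JordanPair

/-- Finite generation of the Jordan pair `(M, N)` with triple products `{a, b, c} = abc + cba`: some
finite subsets of `M` and `N` lie in no proper Jordan subpair. -/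
def JordanPairFG (F : Type*) {R : Type*} [CommRing F] [Ring R] [Algebra F R] (M N : Set R) : Prop :=
  ∃ (S T : Finset R), (S : Set R) ⊆ M ∧ (T : Set R) ⊆ N ∧
    ∀ V W : Submodule F R, (V : Set R) ⊆ M → (W : Set R) ⊆ N →
      (S : Set R) ⊆ (V : Set R) → (T : Set R) ⊆ (W : Set R) →
      (∀ a ∈ V, ∀ b ∈ W, ∀ c ∈ V, a * b * c + c * b * a ∈ V) →
      (∀ b ∈ W, ∀ a ∈ V, ∀ b' ∈ W, b * a * b' + b' * a * b ∈ W) →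
      (V : Set R) = M ∧ (W : Set R) = N

variable {F R : Type*} [CommRing F] [Ring R] [Algebra F R]

theorem jordanPairFG_of_fg {M N : Submodule F R} (hM : M.FG) (hN : N.FG) :
    JordanPairFG F (M : Set R) (N : Set R) := by
  obtain ⟨S, rfl⟩ := hM
  obtain ⟨T, rfl⟩ := hN
  refine ⟨S, T, Submodule.subset_span, Submodule.subset_span, fun V W hV hW hS hT _ _ => ?_⟩
  exact ⟨hV.antisymm (Submodule.span_le.2 hS), hW.antisymm (Submodule.span_le.2 hT)⟩

variable [Star F] [TrivialStar F] [StarRing R] [StarModule F R] [Algebra.FiniteType F R]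
  [IsSimpleRing R] {e : R}

theorem jordanPairFG_skewPeirce_of_not_finite {Z : Type*} [Field Z] [Algebra Z R]
    [Algebra.IsCentral Z R] (hinf : ¬ Module.Finite Z R) (h2 : (2 : R) ≠ 0)
    (he : IsIdempotentElem e) (he0 : e ≠ 0) :
    JordanPairFG F (skewPeirce F e : Set R) (skewPeirce F (star e) : Set R) := by
  obtain ⟨S, T, hS, hT, hSe, hTe, hgen⟩ :=
    exists_finite_forall_skewPeirce_le (F := F) hinf h2 he he0
  obtain ⟨T', S', hT', hS', hTe', hSe', hgen'⟩ :=
    exists_finite_forall_skewPeirce_le (F := F) hinf h2 he.star (star_ne_zero.2 he0)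
  rw [star_star] at hSe'
  refine ⟨(hS.union hS').toFinset, (hT.union hT').toFinset, by simpa using ⟨hSe, hSe'⟩,
    by simpa using ⟨hTe, hTe'⟩, fun V W hV hW hSV hTW hVclosed hWclosed => ?_⟩
  rw [Set.Finite.coe_toFinset, Set.union_subset_iff] at hSV hTW
  exact ⟨hV.antisymm (hgen V W hV hSV.1 hTW.1 hVclosed),
    hW.antisymm (hgen' W V hW hTW.2 hSV.2 hWclosed)⟩

theorem jordanPairFG_skewPeirce_of_isCentral [IsNoetherianRing F] [IsJacobsonRing F]
    (Z : Type*) [Field Z] [Algebra F Z] [Algebra Z R] [IsScalarTower F Z R]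
    [Algebra.IsCentral Z R] (h2 : (2 : R) ≠ 0) (he : IsIdempotentElem e) :
    JordanPairFG F (skewPeirce F e : Set R) (skewPeirce F (star e) : Set R) := by
  by_cases hfin : Module.Finite Z R
  · have := finite_of_finiteType_of_finite F (Z := Z) (A := R)
    exact jordanPairFG_of_fg (IsNoetherian.noetherian _) (IsNoetherian.noetherian _)
  rcases eq_or_ne e 0 with rfl | he0
  · have hbot : skewPeirce F (0 : R) = ⊥ :=
      (Submodule.eq_bot_iff _).2 fun k hk => by rw [← hk.2, zero_mul]
    rw [star_zero, hbot]
    exact jordanPairFG_of_fg Submodule.fg_bot Submodule.fg_bot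
  · exact jordanPairFG_skewPeirce_of_not_finite hfin h2 he he0

theorem jordanPairFG_skewPeirce [IsNoetherianRing F] [IsJacobsonRing F] (h2 : (2 : R) ≠ 0)
    (he : IsIdempotentElem e) :
    JordanPairFG F (skewPeirce F e : Set R) (skewPeirce F (star e) : Set R) := by
  let _ : Field (Subring.center R) := (IsSimpleRing.isField_center R).toField
  let _ : Algebra F (Subring.center R) :=
    ((algebraMap F R).codRestrict (Subring.center R) Set.algebraMap_mem_center).toAlgebra
  have : IsScalarTower F (Subring.center R) R := .of_algebraMap_eq fun _ => rfl
  have : Algebra.IsCentral (Subring.center R) R :=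
    ⟨fun z hz => Algebra.mem_bot.2 ⟨⟨z, hz⟩, rfl⟩⟩
  exact jordanPairFG_skewPeirce_of_isCentral (Subring.center R) h2 he

end JordanPair

theorem jordan_pair_of_skew_corners_fg_general {F R : Type*} [CommRing F] [IsNoetherianRing F]
    [IsJacobsonRing F] [Ring R] [Algebra F R] [Algebra.FiniteType F R] [IsSimpleRing R]
    (h2 : (2 : R) ≠ 0) (st : R →ₗ[F] R) (hst_mul : ∀ a b, st (a * b) = st b * st a)
    (hst_inv : ∀ a, st (st a) = a) {e : R} (he : IsIdempotentElem e) :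
    JordanPairFG F {a | st a = -a ∧ ∃ r, a = e * r * st e}
      {a | st a = -a ∧ ∃ r, a = st e * r * e} := by
  let _ : StarRing R :=
    { star := st, star_involutive := hst_inv, star_mul := hst_mul, star_add := map_add st }
  let _ : Star F := ⟨id⟩
  have : TrivialStar F := ⟨fun _ => rfl⟩
  have : StarModule F R := ⟨map_smul st⟩
  have h := jordanPairFG_skewPeirce (F := F) h2 he
  rwa [coe_skewPeirce he, coe_skewPeirce he.star, star_star] at h

/-- **Lemma 11.**  Let `R` be a simple finitely generated unital `F`-algebra with
involution and an idempotent `e` with `e e* = e* e = 0`, `e + e* = 1`, and suppose `R`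
is not finite-dimensional over its center.  Then the Jordan pair `(K₋₂, K₂)` with triple
products `{a,b,c} = abc + cba` is finitely generated. -/
theorem jordan_pair_of_skew_corners_fg
    (F : Type*) [Field F] (hchar : (2 : F) ≠ 0)
    (R : Type*) [Ring R] [Algebra F R] [IsSimpleRing R]
    (hfg : ∃ s : Finset R, Algebra.adjoin F (s : Set R) = ⊤)
    (st : R →ₗ[F] R)
    (hst_mul : ∀ a b : R, st (a * b) = st b * st a)
    (hst_inv : ∀ a : R, st (st a) = a)
    (e : R) (he : e * e = e)
    (hee : e * st e = 0) (hee' : st e * e = 0)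
    (hsum : e + st e = 1)
    (hinf : ¬ Module.Finite (Subring.center R) R) :
    ∃ (S T : Finset R),
      (S : Set R) ⊆ {a : R | st a = -a ∧ ∃ r : R, a = e * r * st e} ∧
      (T : Set R) ⊆ {a : R | st a = -a ∧ ∃ r : R, a = st e * r * e} ∧
      ∀ V W : Submodule F R,
        (V : Set R) ⊆ {a : R | st a = -a ∧ ∃ r : R, a = e * r * st e} →
        (W : Set R) ⊆ {a : R | st a = -a ∧ ∃ r : R, a = st e * r * e} →
        (S : Set R) ⊆ (V : Set R) → (T : Set R) ⊆ (W : Set R) →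
        (∀ a ∈ V, ∀ b ∈ W, ∀ c ∈ V, a * b * c + c * b * a ∈ V) →
        (∀ b ∈ W, ∀ a ∈ V, ∀ b' ∈ W, b * a * b' + b' * a * b ∈ W) →
        (V : Set R) = {a : R | st a = -a ∧ ∃ r : R, a = e * r * st e} ∧
          (W : Set R) = {a : R | st a = -a ∧ ∃ r : R, a = st e * r * e} := by
  have h2 : (2 : R) ≠ 0 := by
    rw [← map_ofNat (algebraMap F R)]
    exact (map_ne_zero _).2 hchar
  have : Algebra.FiniteType F R := ⟨hfg⟩
  exact jordan_pair_of_skew_corners_fg_general h2 st hst_mul hst_inv he
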